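/- Let (Ω, M, μ) be a σ-finite complete measure space and p : Ω → [1,∞) a bounded measurable variable exponent (i.e. ess sup p < ∞). Then the variable exponent Lebesgue space L^{p(·)}(μ) has the bounded approximation property with constant 2: for every compact subset K of L^{p(·)}(μ) and every ε > 0 there exists a finite rank bounded operator F with ||F|| ≤ 2 and ||f - F f||_{L^{p(·)}} < ε for all f in K. -/

import Mathlib

open MeasureTheory Filter Topology ENNReal

/-- The contribution `|t|^{q}` to the variable-exponent modular, with the usual
convention at `q = ∞` (zero if `t ≤ 1`, infinite otherwise). -/
noncomputable def evpow (t : ℝ) (q : ℝ≥0∞) : ℝ≥0∞ :=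
  if q = ∞ then (if t ≤ 1 then 0 else ∞) else ENNReal.ofReal t ^ q.toReal

/-- The modular `∫ |f(x)/λ|^{p(x)} dμ` of a variable exponent Lebesgue space. -/
noncomputable def eModular {Ω : Type*} [MeasurableSpace Ω] (μ : Measure Ω)
    (p : Ω → ℝ≥0∞) {E : Type*} [NormedAddCommGroup E] (f : Ω → E) (lam : ℝ) : ℝ≥0∞ :=
  ∫⁻ x, evpow (‖f x‖ / lam) (p x) ∂μ

/-- The Luxemburg norm of the variable exponent Lebesgue space `L^{p(·)}(μ)`. -/
noncomputable def eVNorm {Ω : Type*} [MeasurableSpace Ω] (μ : Measure Ω)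
    (p : Ω → ℝ≥0∞) {E : Type*} [NormedAddCommGroup E] (f : Ω → E) : ℝ :=
  sInf {lam : ℝ | 0 < lam ∧ eModular μ p f lam ≤ 1}

/-- Membership in the variable exponent Lebesgue space `L^{p(·)}(μ)`. -/
def MemEVLp {Ω : Type*} [MeasurableSpace Ω] (μ : Measure Ω)
    (p : Ω → ℝ≥0∞) {E : Type*} [NormedAddCommGroup E] (f : Ω → E) : Prop :=
  AEStronglyMeasurable f μ ∧ ∃ lam : ℝ, 0 < lam ∧ eModular μ p f lam ≤ 1

/-- The variable exponent sequence space norm `‖h‖_{ℓ^{q(·)}}`. -/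
noncomputable def eSeqNorm {I : Type*} (q : I → ℝ≥0∞) {E : Type*} [NormedAddCommGroup E]
    (h : I → E) : ℝ :=
  sInf {lam : ℝ | 0 < lam ∧ ∑' i, evpow (‖h i‖ / lam) (q i) ≤ 1}

/-!
Simple functions are dense, so it suffices to find finite rank contractions that almost fix finitely
many simple functions of finite measure support. Partition `Ω` into cells on which these functions
are constant and `p` oscillates by at most `1 / n`, and average over the cells of measure at least
`n⁻²`. The `O(n)` discarded cells have total measure `O(1 / n)`, so the simple functions are almost
fixed. By Jensen's inequality on each cell, averaging enlarges the modular by a factor of at most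
`(1 + n²) ^ (1 / n) * (1 + T / n)`, where `T` is the measure of the support. This tends to `1`, and
rescaling the averaging operator makes it a contraction.
-/

section Evpow

variable {q : ℝ≥0∞}

lemma evpow_zero (hq : q ≠ 0) : evpow 0 q = 0 := by
  by_cases hq' : q = ∞
  · simp [evpow, hq']
  · simp [evpow, hq', ENNReal.toReal_pos hq hq']

lemma evpow_mono (q : ℝ≥0∞) : Monotone fun t => evpow t q := by
  intro t u htu
  by_cases hq : q = ∞
  · simp only [evpow, hq, if_true]
    split_ifs with ht hu
    · exact le_rfl
    · exact zero_le
    · exact absurd (htu.trans ‹u ≤ 1›) ht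
    · exact le_rfl
  · simp only [evpow, hq, if_false]
    gcongr

lemma evpow_convex (hq : 1 ≤ q) {a b : ℝ} (ha : 0 < a) (hb : 0 < b) (hab : a + b = 1) (t u : ℝ) :
    evpow (a * t + b * u) q ≤ ENNReal.ofReal a * evpow t q + ENNReal.ofReal b * evpow u q := by
  by_cases hq' : q = ∞
  · by_cases htu : t ≤ 1 ∧ u ≤ 1
    · have : a * t + b * u ≤ 1 := by nlinarith
      simp [evpow, hq', this]
    · rcases not_and_or.1 htu with h | h <;> simp [evpow, hq', h, ENNReal.mul_top, ha, hb]
  · simp only [evpow, hq', if_false]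
    calc ENNReal.ofReal (a * t + b * u) ^ q.toReal
        ≤ (ENNReal.ofReal a * ENNReal.ofReal t + ENNReal.ofReal b * ENNReal.ofReal u) ^
            q.toReal := by
          rw [← ENNReal.ofReal_mul ha.le, ← ENNReal.ofReal_mul hb.le]
          exact ENNReal.rpow_le_rpow ENNReal.ofReal_add_le ENNReal.toReal_nonneg
      _ ≤ _ := ENNReal.rpow_arith_mean_le_arith_mean2_rpow _ _ _ _
          (by rw [← ENNReal.ofReal_add ha.le hb.le, hab, ENNReal.ofReal_one])
          (by simpa using ENNReal.toReal_mono hq' hq)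

lemma evpow_mul_le {C : ℝ≥0∞} (hC : C ≠ ∞) (hqC : q ≤ C) {a : ℝ} (ha : 1 ≤ a) (t : ℝ) :
    evpow (a * t) q ≤ ENNReal.ofReal a ^ C.toReal * evpow t q := by
  have hq : q ≠ ∞ := ne_top_of_le_ne_top hC hqC
  simp only [evpow, hq, if_false]
  rw [ENNReal.ofReal_mul (zero_le_one.trans ha),
    ENNReal.mul_rpow_of_nonneg _ _ ENNReal.toReal_nonneg]
  gcongr
  exact ENNReal.one_le_ofReal.2 ha

lemma ofReal_le_one_add_evpow (hq : 1 ≤ q) (t : ℝ) : ENNReal.ofReal t ≤ 1 + evpow t q := by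
  rcases le_or_gt t 1 with ht | ht
  · exact (ENNReal.ofReal_le_one.2 ht).trans le_self_add
  refine le_trans ?_ le_add_self
  by_cases hq' : q = ∞
  · simp [evpow, hq', ht.not_ge]
  · simp only [evpow, hq', if_false]
    exact ENNReal.le_rpow_self_of_one_le (ENNReal.one_le_ofReal.2 ht.le)
      (by simpa using ENNReal.toReal_mono hq' hq)

lemma tendsto_evpow_zero (hq0 : q ≠ 0) (hq : q ≠ ∞) :
    Tendsto (fun t => evpow t q) (𝓝 0) (𝓝 0) := by
  have hcont : Continuous fun t : ℝ => ENNReal.ofReal t ^ q.toReal :=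
    ENNReal.continuous_rpow_const.comp ENNReal.continuous_ofReal
  simpa [evpow, hq, ENNReal.toReal_pos hq0 hq] using hcont.tendsto 0

lemma measurable_evpow : Measurable fun z : ℝ × ℝ≥0∞ => evpow z.1 z.2 := by
  refine Measurable.ite (measurable_snd (measurableSet_singleton ∞)) ?_ (by fun_prop)
  exact Measurable.ite (measurable_fst measurableSet_Iic) measurable_const measurable_const

end Evpow

section Modular

variable {Ω : Type*} [MeasurableSpace Ω] {μ : Measure Ω} {p : Ω → ℝ≥0∞}
  {E : Type*} [NormedAddCommGroup E] {f g : Ω → E} {c d : ℝ}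

lemma aemeasurable_evpow_norm_div (hpm : AEMeasurable p μ) (hf : AEStronglyMeasurable f μ)
    (c : ℝ) : AEMeasurable (fun x => evpow (‖f x‖ / c) (p x)) μ :=
  measurable_evpow.comp_aemeasurable ((hf.norm.aemeasurable.div_const c).prodMk hpm)

lemma eModular_congr_ae (h : f =ᵐ[μ] g) (c : ℝ) : eModular μ p f c = eModular μ p g c :=
  lintegral_congr_ae (h.mono fun x hx => by simp only [hx])

lemma eModular_congr_norm (h : ∀ x, ‖f x‖ = ‖g x‖) (c : ℝ) :
    eModular μ p f c = eModular μ p g c := by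
  simp only [eModular, h]

lemma eModular_anti (f : Ω → E) (hc : 0 < c) (hcd : c ≤ d) :
    eModular μ p f d ≤ eModular μ p f c :=
  lintegral_mono fun x => evpow_mono (p x) (by gcongr)

lemma eModular_add_le (hpm : AEMeasurable p μ) (hp : ∀ᵐ x ∂μ, 1 ≤ p x)
    (hf : AEStronglyMeasurable f μ) (hc : 0 < c) (hd : 0 < d) :
    eModular μ p (f + g) (c + d) ≤ ENNReal.ofReal (c / (c + d)) * eModular μ p f c +
      ENNReal.ofReal (d / (c + d)) * eModular μ p g d := by
  unfold eModular
  rw [← lintegral_const_mul' _ _ ENNReal.ofReal_ne_top,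
    ← lintegral_const_mul' _ _ ENNReal.ofReal_ne_top,
    ← lintegral_add_left' ((aemeasurable_evpow_norm_div hpm hf c).const_mul _)]
  refine lintegral_mono_ae (hp.mono fun x hx => ?_)
  refine le_trans (evpow_mono (p x) ?_) (evpow_convex hx (div_pos hc (add_pos hc hd))
    (div_pos hd (add_pos hc hd)) (by field_simp) (‖f x‖ / c) (‖g x‖ / d))
  calc ‖(f + g) x‖ / (c + d) ≤ (‖f x‖ + ‖g x‖) / (c + d) := by gcongr; exact norm_add_le _ _
    _ = c / (c + d) * (‖f x‖ / c) + d / (c + d) * (‖g x‖ / d) := by field_simp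

lemma eModular_mul_le (hp : ∀ᵐ x ∂μ, 1 ≤ p x) (f : Ω → E) (c : ℝ) {a : ℝ} (ha : 1 < a) :
    eModular μ p f (a * c) ≤ ENNReal.ofReal a⁻¹ * eModular μ p f c := by
  have ha0 : 0 < a := one_pos.trans ha
  unfold eModular
  rw [← lintegral_const_mul' _ _ ENNReal.ofReal_ne_top]
  refine lintegral_mono_ae (hp.mono fun x hx => ?_)
  have hconv := evpow_convex hx (inv_pos.2 ha0) (sub_pos.2 (inv_lt_one_of_one_lt₀ ha))
    (add_sub_cancel _ _) (‖f x‖ / c) 0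
  rw [evpow_zero (one_pos.trans_le hx).ne', mul_zero, mul_zero, add_zero, add_zero] at hconv
  rwa [mul_comm a, ← div_div, div_eq_inv_mul]

lemma eModular_smul {𝕜 : Type*} [NormedField 𝕜] [NormedSpace 𝕜 E] {a : 𝕜} (ha : a ≠ 0)
    (f : Ω → E) (c : ℝ) : eModular μ p (a • f) (‖a‖ * c) = eModular μ p f c := by
  simp only [eModular, Pi.smul_apply, norm_smul, mul_div_mul_left _ _ (norm_ne_zero_iff.2 ha)]

lemma eVNorm_nonneg (μ : Measure Ω) (p : Ω → ℝ≥0∞) (f : Ω → E) : 0 ≤ eVNorm μ p f :=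
  Real.sInf_nonneg fun _ hc => hc.1.le

lemma eVNorm_le_of_eModular_le_one (hc : 0 < c) (h : eModular μ p f c ≤ 1) : eVNorm μ p f ≤ c :=
  csInf_le ⟨0, fun _ hd => hd.1.le⟩ ⟨hc, h⟩

lemma eVNorm_sub_comm (f g : Ω → E) : eVNorm μ p (f - g) = eVNorm μ p (g - f) := by
  have h : eModular μ p (f - g) = eModular μ p (g - f) :=
    funext fun c => eModular_congr_norm (fun x => norm_sub_rev (f x) (g x)) c
  simp only [eVNorm, h]

lemma MemEVLp.eModular_le_one_of_eVNorm_lt (hf : MemEVLp μ p f) (h : eVNorm μ p f < c) :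
    eModular μ p f c ≤ 1 := by
  obtain ⟨d, ⟨hd, hfd⟩, hdc⟩ := exists_lt_of_csInf_lt hf.2 h
  exact (eModular_anti f hd hdc.le).trans hfd

lemma memEVLp_zero (hp : ∀ᵐ x ∂μ, 1 ≤ p x) : MemEVLp μ p (0 : Ω → E) := by
  refine ⟨aestronglyMeasurable_zero, 1, one_pos, ?_⟩
  have : eModular μ p (0 : Ω → E) 1 = ∫⁻ _, 0 ∂μ :=
    lintegral_congr_ae <| hp.mono fun x hx => by
      simpa using evpow_zero (one_pos.trans_le hx).ne'
  simp [this]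

lemma eModular_add_le_one (hpm : AEMeasurable p μ) (hp : ∀ᵐ x ∂μ, 1 ≤ p x)
    (hf : AEStronglyMeasurable f μ) (hc : 0 < c) (hd : 0 < d)
    (hfc : eModular μ p f c ≤ 1) (hgd : eModular μ p g d ≤ 1) :
    eModular μ p (f + g) (c + d) ≤ 1 := by
  calc eModular μ p (f + g) (c + d)
      ≤ ENNReal.ofReal (c / (c + d)) * eModular μ p f c +
        ENNReal.ofReal (d / (c + d)) * eModular μ p g d := eModular_add_le hpm hp hf hc hd
    _ ≤ ENNReal.ofReal (c / (c + d)) * 1 + ENNReal.ofReal (d / (c + d)) * 1 := by gcongr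
    _ = 1 := by
      rw [mul_one, mul_one, ← ENNReal.ofReal_add (by positivity) (by positivity), ← add_div,
        div_self (add_pos hc hd).ne', ENNReal.ofReal_one]

lemma MemEVLp.add (hpm : AEMeasurable p μ) (hp : ∀ᵐ x ∂μ, 1 ≤ p x)
    (hf : MemEVLp μ p f) (hg : MemEVLp μ p g) : MemEVLp μ p (f + g) := by
  obtain ⟨hfm, c, hc, hfc⟩ := hf
  obtain ⟨hgm, d, hd, hgd⟩ := hg
  exact ⟨hfm.add hgm, c + d, add_pos hc hd, eModular_add_le_one hpm hp hfm hc hd hfc hgd⟩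

lemma MemEVLp.eVNorm_add_le (hpm : AEMeasurable p μ) (hp : ∀ᵐ x ∂μ, 1 ≤ p x)
    (hf : MemEVLp μ p f) (hg : MemEVLp μ p g) :
    eVNorm μ p (f + g) ≤ eVNorm μ p f + eVNorm μ p g := by
  refine le_of_forall_pos_le_add fun ε hε => ?_
  have hc : eVNorm μ p f < eVNorm μ p f + ε / 2 := by linarith
  have hd : eVNorm μ p g < eVNorm μ p g + ε / 2 := by linarith
  have hc0 := (eVNorm_nonneg μ p f).trans_lt hc
  have hd0 := (eVNorm_nonneg μ p g).trans_lt hd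
  refine (eVNorm_le_of_eModular_le_one (add_pos hc0 hd0) (eModular_add_le_one hpm hp hf.1 hc0 hd0
    (hf.eModular_le_one_of_eVNorm_lt hc) (hg.eModular_le_one_of_eVNorm_lt hd))).trans ?_
  linarith

lemma MemEVLp.smul {𝕜 : Type*} [NormedField 𝕜] [NormedSpace 𝕜 E] (hp : ∀ᵐ x ∂μ, 1 ≤ p x)
    (hf : MemEVLp μ p f) (a : 𝕜) : MemEVLp μ p (a • f) := by
  rcases eq_or_ne a 0 with rfl | ha
  · simpa using memEVLp_zero hp
  obtain ⟨hfm, c, hc, hfc⟩ := hf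
  exact ⟨hfm.const_smul a, ‖a‖ * c, by positivity, (eModular_smul ha f c).trans_le hfc⟩

lemma MemEVLp.sub (hpm : AEMeasurable p μ) (hp : ∀ᵐ x ∂μ, 1 ≤ p x)
    (hf : MemEVLp μ p f) (hg : MemEVLp μ p g) : MemEVLp μ p (f - g) := by
  refine sub_eq_add_neg f g ▸ hf.add hpm hp ?_
  obtain ⟨hgm, c, hc, hgc⟩ := hg
  exact ⟨hgm.neg, c, hc, (eModular_congr_norm (fun x => norm_neg (g x)) c).trans_le hgc⟩

lemma MemEVLp.eVNorm_le_mul (hf : MemEVLp μ p f) {a : ℝ} (ha : 0 < a)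
    (h : ∀ c, 0 < c → eModular μ p f c ≤ 1 → eModular μ p g (a * c) ≤ 1) :
    eVNorm μ p g ≤ a * eVNorm μ p f := by
  rw [← div_le_iff₀' ha]
  refine le_csInf hf.2 fun c hc => ?_
  rw [div_le_iff₀' ha]
  exact eVNorm_le_of_eModular_le_one (mul_pos ha hc.1) (h c hc.1 hc.2)

lemma MemEVLp.eVNorm_smul_le {𝕜 : Type*} [NormedField 𝕜] [NormedSpace 𝕜 E]
    (hf : MemEVLp μ p f) {a : 𝕜} (ha : a ≠ 0) :
    eVNorm μ p (a • f) ≤ ‖a‖ * eVNorm μ p f :=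
  hf.eVNorm_le_mul (norm_pos_iff.2 ha) fun c _ hfc => (eModular_smul ha f c).trans_le hfc

lemma MemEVLp.eVNorm_sub_le_add (hpm : AEMeasurable p μ) (hp : ∀ᵐ x ∂μ, 1 ≤ p x) {h : Ω → E}
    (hf : MemEVLp μ p f) (hg : MemEVLp μ p g) (hh : MemEVLp μ p h) :
    eVNorm μ p (f - h) ≤ eVNorm μ p (f - g) + eVNorm μ p (g - h) := by
  simpa using (hf.sub hpm hp hg).eVNorm_add_le hpm hp (hg.sub hpm hp hh)

lemma MemEVLp.integrableOn (hp : ∀ᵐ x ∂μ, 1 ≤ p x) (hf : MemEVLp μ p f) {A : Set Ω}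
    (hA : μ A ≠ ∞) : IntegrableOn f A μ := by
  obtain ⟨hfm, c, hc, hfc⟩ := hf
  refine ⟨hfm.restrict, ?_⟩
  calc ∫⁻ x in A, ‖f x‖ₑ ∂μ
      = ∫⁻ x in A, ENNReal.ofReal c * ENNReal.ofReal (‖f x‖ / c) ∂μ := by
        simp only [← ENNReal.ofReal_mul hc.le, mul_div_cancel₀ _ hc.ne', ofReal_norm]
    _ = ENNReal.ofReal c * ∫⁻ x in A, ENNReal.ofReal (‖f x‖ / c) ∂μ :=
        lintegral_const_mul' _ _ ENNReal.ofReal_ne_top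
    _ ≤ ENNReal.ofReal c * ∫⁻ x in A, (1 + evpow (‖f x‖ / c) (p x)) ∂μ := by
        gcongr ENNReal.ofReal c * ?_
        exact lintegral_mono_ae
          ((ae_restrict_of_ae hp).mono fun x hx => ofReal_le_one_add_evpow hx _)
    _ = ENNReal.ofReal c * (μ A + ∫⁻ x in A, evpow (‖f x‖ / c) (p x) ∂μ) := by
        rw [lintegral_add_left measurable_const, setLIntegral_one]
    _ ≤ ENNReal.ofReal c * (μ A + 1) := by
        gcongr
        exact (setLIntegral_le_lintegral _ _).trans hfc
    _ < ∞ := ENNReal.mul_lt_top ENNReal.ofReal_lt_top (by simp [hA.lt_top])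

end Modular

section BoundedExponent

variable {Ω : Type*} [MeasurableSpace Ω] {μ : Measure Ω} {p : Ω → ℝ≥0∞} {C : ℝ≥0∞}
  {E : Type*} [NormedAddCommGroup E] {f : Ω → E}

lemma MemEVLp.eModular_ne_top (hC : C ≠ ∞) (hpC : ∀ᵐ x ∂μ, p x ≤ C) (hf : MemEVLp μ p f)
    {c : ℝ} (hc : 0 < c) : eModular μ p f c ≠ ∞ := by
  obtain ⟨-, d, hd, hfd⟩ := hf
  set a := max 1 (d / c)
  have haC : ENNReal.ofReal a ^ C.toReal ≠ ∞ :=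
    ENNReal.rpow_ne_top_of_nonneg ENNReal.toReal_nonneg ENNReal.ofReal_ne_top
  have hle : eModular μ p f c ≤ ENNReal.ofReal a ^ C.toReal * eModular μ p f d := by
    unfold eModular
    rw [← lintegral_const_mul' _ _ haC]
    refine lintegral_mono_ae (hpC.mono fun x hx => ?_)
    refine le_trans (evpow_mono (p x) ?_) (evpow_mul_le hC hx (le_max_left _ _) (‖f x‖ / d))
    calc ‖f x‖ / c = d / c * (‖f x‖ / d) := by field_simp
      _ ≤ a * (‖f x‖ / d) := by gcongr; exact le_max_right _ _
  exact ne_top_of_le_ne_top (ENNReal.mul_ne_top haC (ne_top_of_le_ne_top one_ne_top hfd)) hle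

-- The level set `{s = y}` contributes its full measure to the modular of `s` at scale `‖y‖`.
lemma MemEVLp.finMeasSupp (hC : C ≠ ∞) (hpC : ∀ᵐ x ∂μ, p x ≤ C) {s : SimpleFunc Ω E}
    (hs : MemEVLp μ p s) : s.FinMeasSupp μ := by
  refine SimpleFunc.finMeasSupp_iff.2 fun y hy => ?_
  have hy' : 0 < ‖y‖ := norm_pos_iff.2 hy
  calc μ (s ⁻¹' {y}) = ∫⁻ _ in s ⁻¹' {y}, 1 ∂μ := (setLIntegral_one _).symm
    _ = ∫⁻ x in s ⁻¹' {y}, evpow (‖s x‖ / ‖y‖) (p x) ∂μ := by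
      refine setLIntegral_congr_fun_ae (s.measurableSet_fiber y) (hpC.mono fun x hx hxy => ?_)
      rw [show s x = y from hxy, div_self hy'.ne']
      simp [evpow, ne_top_of_le_ne_top hC hx]
    _ ≤ eModular μ p s ‖y‖ := setLIntegral_le_lintegral _ _
    _ < ∞ := (hs.eModular_ne_top hC hpC hy').lt_top

lemma MemEVLp.tendsto_eModular_sub_approx (hpm : AEMeasurable p μ) (hp : ∀ᵐ x ∂μ, 1 ≤ p x)
    (hC : C ≠ ∞) (hpC : ∀ᵐ x ∂μ, p x ≤ C) (hf : MemEVLp μ p f) {s : ℕ → SimpleFunc Ω E}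
    (hs : ∀ n x, ‖f x - s n x‖ ≤ ‖f x‖) (hlim : ∀ x, Tendsto (fun n => s n x) atTop (𝓝 (f x)))
    {c : ℝ} (hc : 0 < c) :
    Tendsto (fun n => eModular μ p (f - ⇑(s n)) c) atTop (𝓝 0) := by
  rw [← lintegral_zero (μ := μ)]
  refine tendsto_lintegral_of_dominated_convergence' (fun x => evpow (‖f x‖ / c) (p x))
    (fun n => aemeasurable_evpow_norm_div hpm (hf.1.sub (s n).aestronglyMeasurable) c)
    (fun n => Eventually.of_forall fun x =>
      evpow_mono (p x) (div_le_div_of_nonneg_right (hs n x) hc.le))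
    (hf.eModular_ne_top hC hpC hc) ?_
  filter_upwards [hp, hpC] with x hx hxC
  have hdiff : Tendsto (fun n => ‖f x - s n x‖ / c) atTop (𝓝 0) := by
    simpa using ((tendsto_const_nhds (x := f x)).sub (hlim x)).norm.div_const c
  exact (tendsto_evpow_zero (one_pos.trans_le hx).ne' (ne_top_of_le_ne_top hC hxC)).comp hdiff

lemma MemEVLp.exists_simpleFunc_eVNorm_sub_le (hpm : AEMeasurable p μ) (hp : ∀ᵐ x ∂μ, 1 ≤ p x)
    (hC : C ≠ ∞) (hpC : ∀ᵐ x ∂μ, p x ≤ C) (hf : MemEVLp μ p f) {δ : ℝ} (hδ : 0 < δ) :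
    ∃ s : SimpleFunc Ω E, MemEVLp μ p s ∧ eVNorm μ p (f - ⇑s) ≤ δ := by
  borelize E
  obtain ⟨f', hf'm, hff'⟩ := hf.1
  have hf' : MemEVLp μ p f' :=
    ⟨hf'm.aestronglyMeasurable,
      hf.2.imp fun c => And.imp_right (eModular_congr_ae hff' c).ge.trans⟩
  have : TopologicalSpace.SeparableSpace (Set.range f' ∪ {0} : Set E) :=
    hf'm.separableSpace_range_union_singleton
  have h0 : (0 : E) ∈ Set.range f' ∪ {0} := by simp
  let s : ℕ → SimpleFunc Ω E :=
    SimpleFunc.approxOn f' hf'm.measurable (Set.range f' ∪ {0}) 0 h0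
  have hs : ∀ n x, ‖f' x - s n x‖ ≤ ‖f' x‖ := fun n x => by
    have := SimpleFunc.edist_approxOn_le hf'm.measurable h0 x n
    rwa [edist_comm, edist_eq_enorm_sub, edist_eq_enorm_sub, zero_sub, enorm_neg,
      enorm_le_iff_norm_le] at this
  have hlim : ∀ x, Tendsto (fun n => s n x) atTop (𝓝 (f' x)) := fun x =>
    SimpleFunc.tendsto_approxOn hf'm.measurable h0 (subset_closure (by simp))
  obtain ⟨n, hn⟩ := ((hf'.tendsto_eModular_sub_approx hpm hp hC hpC hs hlim hδ).eventually
    (ge_mem_nhds zero_lt_one)).exists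
  have hsub : MemEVLp μ p (f' - ⇑(s n)) :=
    ⟨hf'.1.sub (s n).aestronglyMeasurable, δ, hδ, hn⟩
  refine ⟨s n, by simpa using hf'.sub hpm hp hsub, eVNorm_le_of_eModular_le_one hδ ?_⟩
  exact (eModular_congr_ae (hff'.sub .rfl) δ).trans_le hn

lemma exists_pos_forall_setLIntegral_evpow_le_one {ι : Type*} [Finite ι]
    (hC : C ≠ ∞) (hpC : ∀ᵐ x ∂μ, p x ≤ C) {f : ι → Ω → E} (hf : ∀ i, MemEVLp μ p (f i))
    {δ : ℝ} (hδ : 0 < δ) :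
    ∃ τ > 0, ∀ B, μ B < τ → ∀ i, ∫⁻ x in B, evpow (‖f i x‖ / δ) (p x) ∂μ ≤ 1 := by
  have := Fintype.ofFinite ι
  choose τ hτ hτB using fun i => exists_pos_setLIntegral_lt_of_measure_lt
    ((hf i).eModular_ne_top hC hpC hδ) one_ne_zero
  refine ⟨Finset.univ.inf τ, (Finset.lt_inf_iff ENNReal.zero_lt_top).2 fun i _ => hτ i,
    fun B hB i => (hτB i B (hB.trans_le (Finset.inf_le (Finset.mem_univ i)))).le⟩

end BoundedExponent

section Jensen

lemma rpow_le_rpow_add_ofReal {q r : ℝ} (hq : 0 ≤ q) (hr : 0 < r) (hqr : q ≤ r) (u : ℝ≥0∞) :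
    u ^ q ≤ u ^ r + ENNReal.ofReal (1 - q / r) := by
  rcases eq_or_ne u ∞ with rfl | hu
  · simp [ENNReal.top_rpow_of_pos hr]
  lift u to NNReal using hu
  have hqr' : q / r ≤ 1 := (div_le_one hr).2 hqr
  -- Young's inequality for `u ^ q = (u ^ r) ^ (q / r) * 1 ^ (1 - q / r)`.
  have hyoung := Real.geom_mean_le_arith_mean2_weighted (div_nonneg hq hr.le)
    (sub_nonneg.2 hqr') (Real.rpow_nonneg u.coe_nonneg r) zero_le_one (add_sub_cancel _ _)
  rw [← Real.rpow_mul u.coe_nonneg, mul_div_cancel₀ _ hr.ne', Real.one_rpow, mul_one,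
    mul_one] at hyoung
  have hreal : (u : ℝ) ^ q ≤ (u : ℝ) ^ r + (1 - q / r) :=
    hyoung.trans (by gcongr; exact mul_le_of_le_one_left (Real.rpow_nonneg u.coe_nonneg r) hqr')
  calc (u : ℝ≥0∞) ^ q = ENNReal.ofReal ((u : ℝ) ^ q) := by
        rw [← ENNReal.ofReal_rpow_of_nonneg u.coe_nonneg hq, ENNReal.ofReal_coe_nnreal]
    _ ≤ ENNReal.ofReal ((u : ℝ) ^ r + (1 - q / r)) := ENNReal.ofReal_le_ofReal hreal
    _ = (u : ℝ≥0∞) ^ r + ENNReal.ofReal (1 - q / r) := by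
        rw [ENNReal.ofReal_add (Real.rpow_nonneg u.coe_nonneg r) (sub_nonneg.2 hqr'),
          ← ENNReal.ofReal_rpow_of_nonneg u.coe_nonneg hr.le, ENNReal.ofReal_coe_nnreal]

lemma rpow_le_rpow_mul_rpow {m b : ℝ≥0∞} {q r η : ℝ} (hmb : m ≤ b) (hb : 1 ≤ b) (hq : 0 ≤ q)
    (hη : 0 ≤ η) (hqr : q ≤ r) (hrη : r ≤ q + η) : m ^ r ≤ b ^ η * m ^ q := by
  rcases le_total m 1 with hm | hm
  · exact (ENNReal.rpow_le_rpow_of_exponent_ge hm hqr).trans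
      (le_mul_of_one_le_left' (by simpa using ENNReal.rpow_le_rpow hb hη))
  · calc m ^ r ≤ m ^ (η + q) := ENNReal.rpow_le_rpow_of_exponent_le hm (by linarith)
      _ = m ^ η * m ^ q := ENNReal.rpow_add_of_nonneg _ _ hη hq
      _ ≤ b ^ η * m ^ q := by gcongr

variable {Ω : Type*} [MeasurableSpace Ω] {μ : Measure Ω} {u : Ω → ℝ≥0∞} {q : ℝ}

lemma lintegral_rpow_le_of_isProbabilityMeasure [IsProbabilityMeasure μ] (hq : 1 ≤ q)
    (hu : AEMeasurable u μ) : (∫⁻ x, u x ∂μ) ^ q ≤ ∫⁻ x, u x ^ q ∂μ := by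
  have h := eLpNorm'_le_eLpNorm'_of_exponent_le one_pos hq μ hu.aestronglyMeasurable
  simp only [eLpNorm', enorm_eq_self, ENNReal.rpow_one, one_div, inv_one] at h
  exact (ENNReal.le_rpow_inv_iff (zero_lt_one.trans_le hq)).1 h

lemma setLAverage_rpow_mul_measure_le {A : Set Ω} (hA0 : μ A ≠ 0) (hA : μ A ≠ ∞) (hq : 1 ≤ q)
    (hu : AEMeasurable u μ) :
    (⨍⁻ x in A, u x ∂μ) ^ q * μ A ≤ ∫⁻ x in A, u x ^ q ∂μ := by
  have : IsFiniteMeasure (μ.restrict A) := isFiniteMeasure_restrict.2 hA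
  have : NeZero (μ.restrict A) := ⟨by simpa using hA0⟩
  calc (⨍⁻ x in A, u x ∂μ) ^ q * μ A ≤ (⨍⁻ x in A, u x ^ q ∂μ) * μ A := by
        gcongr
        exact lintegral_rpow_le_of_isProbabilityMeasure hq
          (hu.restrict.smul_measure _)
    _ = ∫⁻ x in A, u x ^ q ∂μ := by
        rw [mul_comm, measure_mul_setLAverage _ hA]

lemma setLAverage_le_one_add_inv {A : Set Ω} (hAm : MeasurableSet A) (hA0 : μ A ≠ 0)
    (hA : μ A ≠ ∞) {P : Ω → ℝ} (hP : ∀ x ∈ A, 1 ≤ P x) (hu1 : ∫⁻ x in A, u x ^ P x ∂μ ≤ 1) :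
    ⨍⁻ x in A, u x ∂μ ≤ 1 + (μ A)⁻¹ := by
  have hu (x) (hx : x ∈ A) : u x ≤ 1 + u x ^ P x := by
    rcases le_total (u x) 1 with h | h
    · exact h.trans le_self_add
    · exact (ENNReal.le_rpow_self_of_one_le h (hP x hx)).trans le_add_self
  calc ⨍⁻ x in A, u x ∂μ = (∫⁻ x in A, u x ∂μ) / μ A := setLAverage_eq _ _ _
    _ ≤ (μ A + 1) / μ A := by
        gcongr
        calc ∫⁻ x in A, u x ∂μ ≤ ∫⁻ x in A, (1 + u x ^ P x) ∂μ := setLIntegral_mono' hAm hu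
          _ ≤ μ A + 1 := by
            rw [lintegral_add_left measurable_const, setLIntegral_one]
            gcongr
    _ = 1 + (μ A)⁻¹ := by rw [ENNReal.add_div, ENNReal.div_self hA0 hA, one_div]

/- With a constant exponent `q` this is Jensen's inequality. The two passages between `q` and
`P x` cost the factor `(1 + θ⁻¹) ^ η` and the term `η * μ A`. -/
lemma setLIntegral_setLAverage_rpow_le {A : Set Ω} (hAm : MeasurableSet A) (hA : μ A ≠ ∞)
    {θ : ℝ≥0∞} (hθ : θ ≠ 0) (hθA : θ ≤ μ A) {P : Ω → ℝ} {η : ℝ} (hη : 0 ≤ η) (hq : 1 ≤ q)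
    (hP : ∀ x ∈ A, P x ∈ Set.Icc q (q + η)) (hu : AEMeasurable u μ)
    (hu1 : ∫⁻ x in A, u x ^ P x ∂μ ≤ 1) :
    ∫⁻ x in A, (⨍⁻ y in A, u y ∂μ) ^ P x ∂μ ≤
      (1 + θ⁻¹) ^ η * (∫⁻ x in A, u x ^ P x ∂μ + ENNReal.ofReal η * μ A) := by
  have hA0 : μ A ≠ 0 := (hθ.bot_lt.trans_le hθA).ne'
  have hq0 : 0 < q := one_pos.trans_le hq
  set m := ⨍⁻ y in A, u y ∂μ
  have hm : m ≤ 1 + θ⁻¹ :=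
    (setLAverage_le_one_add_inv hAm hA0 hA (fun x hx => hq.trans (hP x hx).1) hu1).trans
      (by gcongr)
  have hyoung (x) (hx : x ∈ A) : u x ^ q ≤ u x ^ P x + ENNReal.ofReal η := by
    obtain ⟨hqP, hPη⟩ := hP x hx
    have hP0 : 0 < P x := hq0.trans_le hqP
    refine (rpow_le_rpow_add_ofReal hq0.le hP0 hqP (u x)).trans ?_
    gcongr
    rw [one_sub_div hP0.ne', div_le_iff₀ hP0]
    nlinarith
  calc ∫⁻ x in A, m ^ P x ∂μ ≤ ∫⁻ _ in A, (1 + θ⁻¹) ^ η * m ^ q ∂μ :=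
        setLIntegral_mono' hAm fun x hx =>
          rpow_le_rpow_mul_rpow hm le_self_add hq0.le hη (hP x hx).1 (hP x hx).2
    _ = (1 + θ⁻¹) ^ η * (m ^ q * μ A) := by rw [setLIntegral_const, mul_assoc]
    _ ≤ (1 + θ⁻¹) ^ η * ∫⁻ x in A, (u x ^ P x + ENNReal.ofReal η) ∂μ := by
        gcongr
        exact (setLAverage_rpow_mul_measure_le hA0 hA hq hu).trans
          (setLIntegral_mono' hAm hyoung)
    _ = (1 + θ⁻¹) ^ η * (∫⁻ x in A, u x ^ P x ∂μ + ENNReal.ofReal η * μ A) := by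
        rw [lintegral_add_right _ measurable_const, setLIntegral_const]

end Jensen

section CellAverage

variable {Ω : Type*} [MeasurableSpace Ω] {μ : Measure Ω} {Λ : Type*}
  {E : Type*} [NormedAddCommGroup E] [NormedSpace ℝ E]

/-- The averaging operator of the partition of `Ω` into the cells `π ⁻¹' {l}`: `f` is replaced by
its mean on the cells with label in `J`, and by zero on the remaining ones. -/
noncomputable def cellAverage (μ : Measure Ω) (π : SimpleFunc Ω Λ) (J : Finset Λ) (f : Ω → E) :
    SimpleFunc Ω E :=
  π.map ((J : Set Λ).indicator fun l => ⨍ y in π ⁻¹' {l}, f y ∂μ)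

variable {π : SimpleFunc Ω Λ} {J : Finset Λ}

lemma cellAverage_apply_of_mem {x : Ω} (hx : π x ∈ J) (f : Ω → E) :
    cellAverage μ π J f x = ⨍ y in π ⁻¹' {π x}, f y ∂μ := by
  rw [cellAverage, SimpleFunc.map_apply, Set.indicator_of_mem (Finset.mem_coe.2 hx)]

lemma cellAverage_apply_of_notMem {x : Ω} (hx : π x ∉ J) (f : Ω → E) :
    cellAverage μ π J f x = 0 := by
  rw [cellAverage, SimpleFunc.map_apply, Set.indicator_of_notMem (mt Finset.mem_coe.1 hx)]

lemma cellAverage_add {f g : Ω → E} (hf : ∀ l ∈ J, IntegrableOn f (π ⁻¹' {l}) μ)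
    (hg : ∀ l ∈ J, IntegrableOn g (π ⁻¹' {l}) μ) :
    ⇑(cellAverage μ π J (f + g)) = cellAverage μ π J f + cellAverage μ π J g := by
  ext x
  by_cases hx : π x ∈ J
  · simp only [Pi.add_apply, cellAverage_apply_of_mem hx, setAverage_eq]
    rw [integral_add (hf _ hx) (hg _ hx), smul_add]
  · simp only [Pi.add_apply, cellAverage_apply_of_notMem hx, add_zero]

lemma cellAverage_smul {𝕜 : Type*} [NormedField 𝕜] [NormedSpace 𝕜 E]
    [SMulCommClass ℝ 𝕜 E] (a : 𝕜) (f : Ω → E) :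
    ⇑(cellAverage μ π J (a • f)) = a • ⇑(cellAverage μ π J f) := by
  ext x
  by_cases hx : π x ∈ J
  · simp only [Pi.smul_apply, cellAverage_apply_of_mem hx]
    exact integral_smul a f
  · simp only [Pi.smul_apply, cellAverage_apply_of_notMem hx, smul_zero]

lemma cellAverage_comp_eq_indicator [CompleteSpace E] (hJ0 : ∀ l ∈ J, μ (π ⁻¹' {l}) ≠ 0)
    (hJ : ∀ l ∈ J, μ (π ⁻¹' {l}) ≠ ∞) (φ : Λ → E) :
    ⇑(cellAverage μ π J (φ ∘ π)) = (π ⁻¹' J).indicator (φ ∘ π) := by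
  ext x
  by_cases hx : π x ∈ J
  · rw [cellAverage_apply_of_mem hx, Set.indicator_of_mem (by simpa using hx)]
    calc ⨍ y in π ⁻¹' {π x}, (φ ∘ π) y ∂μ = ⨍ _ in π ⁻¹' {π x}, (φ ∘ π) x ∂μ :=
          setAverage_congr_fun (π.measurableSet_fiber _)
            (Eventually.of_forall fun y hy => congrArg φ hy)
      _ = (φ ∘ π) x := setAverage_const (hJ0 _ hx) (hJ _ hx) _
  · rw [cellAverage_apply_of_notMem hx, Set.indicator_of_notMem (by simpa using hx)]

lemma enorm_setAverage_le (A : Set Ω) (f : Ω → E) :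
    ‖⨍ x in A, f x ∂μ‖ₑ ≤ ⨍⁻ x in A, ‖f x‖ₑ ∂μ :=
  enorm_integral_le_lintegral_enorm f

lemma lintegral_enorm_cellAverage_rpow_le {P : Ω → ℝ} {θ : ℝ≥0∞} {η : ℝ} (hθ : θ ≠ 0)
    (hη : 0 ≤ η) (hJθ : ∀ l ∈ J, θ ≤ μ (π ⁻¹' {l})) (hJ : ∀ l ∈ J, μ (π ⁻¹' {l}) ≠ ∞)
    (hosc : ∀ l, ∃ q, 1 ≤ q ∧ ∀ x, π x = l → P x ∈ Set.Icc q (q + η))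
    {f : Ω → E} (hf : AEStronglyMeasurable f μ) (hf1 : ∫⁻ x, ‖f x‖ₑ ^ P x ∂μ ≤ 1) :
    ∫⁻ x, ‖cellAverage μ π J f x‖ₑ ^ P x ∂μ ≤
      (1 + θ⁻¹) ^ η * (1 + ENNReal.ofReal η * μ (π ⁻¹' J)) := by
  have hP (x) : 0 < P x := by
    obtain ⟨q, hq, hqP⟩ := hosc (π x)
    exact one_pos.trans_le (hq.trans (hqP x rfl).1)
  have hdisj : (J : Set Λ).PairwiseDisjoint fun l => π ⁻¹' {l} := fun l _ l' _ hll' =>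
    Disjoint.preimage π (Set.disjoint_singleton.2 hll')
  have hmeas (l) (_ : l ∈ J) : MeasurableSet (π ⁻¹' {l}) := π.measurableSet_fiber l
  have hcells : π ⁻¹' J = ⋃ l ∈ J, π ⁻¹' {l} := by ext x; simp
  have hsum (u : Ω → ℝ≥0∞) : ∑ l ∈ J, ∫⁻ x in π ⁻¹' {l}, u x ∂μ = ∫⁻ x in π ⁻¹' J, u x ∂μ := by
    rw [hcells, lintegral_biUnion_finset hdisj hmeas]
  have hsupp : (fun x => ‖cellAverage μ π J f x‖ₑ ^ P x).support ⊆ π ⁻¹' J := fun x hx => by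
    by_contra hxJ
    exact hx (by simp [cellAverage_apply_of_notMem (by simpa using hxJ), hP x])
  have hcell (l) (hl : l ∈ J) : ∫⁻ x in π ⁻¹' {l}, ‖cellAverage μ π J f x‖ₑ ^ P x ∂μ ≤
      (1 + θ⁻¹) ^ η * (∫⁻ x in π ⁻¹' {l}, ‖f x‖ₑ ^ P x ∂μ +
        ENNReal.ofReal η * μ (π ⁻¹' {l})) := by
    obtain ⟨q, hq, hqP⟩ := hosc l
    refine le_trans (setLIntegral_mono' (hmeas l hl) fun x (hx : π x = l) => ?_)
      (setLIntegral_setLAverage_rpow_le (hmeas l hl) (hJ l hl) hθ (hJθ l hl) hη hq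
        (fun x hx => hqP x hx) hf.enorm ((setLIntegral_le_lintegral _ _).trans hf1))
    rw [cellAverage_apply_of_mem (hx ▸ hl), hx]
    exact ENNReal.rpow_le_rpow (enorm_setAverage_le _ f) (hP x).le
  calc ∫⁻ x, ‖cellAverage μ π J f x‖ₑ ^ P x ∂μ
      = ∑ l ∈ J, ∫⁻ x in π ⁻¹' {l}, ‖cellAverage μ π J f x‖ₑ ^ P x ∂μ := by
        rw [hsum, setLIntegral_eq_of_support_subset hsupp]
    _ ≤ ∑ l ∈ J, (1 + θ⁻¹) ^ η * (∫⁻ x in π ⁻¹' {l}, ‖f x‖ₑ ^ P x ∂μ +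
        ENNReal.ofReal η * μ (π ⁻¹' {l})) := Finset.sum_le_sum hcell
    _ = (1 + θ⁻¹) ^ η * (∫⁻ x in π ⁻¹' J, ‖f x‖ₑ ^ P x ∂μ +
        ENNReal.ofReal η * μ (π ⁻¹' J)) := by
        rw [← Finset.mul_sum, Finset.sum_add_distrib, ← Finset.mul_sum, hsum, hcells,
          measure_biUnion_finset hdisj hmeas]
    _ ≤ (1 + θ⁻¹) ^ η * (1 + ENNReal.ofReal η * μ (π ⁻¹' J)) := by
        gcongr
        exact (setLIntegral_le_lintegral _ _).trans hf1

end CellAverage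

section FiniteRank

lemma exists_finiteDimensional_range_extension {K V W : Type*} [DivisionRing K] [AddCommGroup V]
    [Module K V] [AddCommGroup W] [Module K W] {U : Submodule K V} (T : U →ₗ[K] W)
    [FiniteDimensional K (LinearMap.range T)] :
    ∃ F : V →ₗ[K] W, FiniteDimensional K (LinearMap.range F) ∧ ∀ u : U, F u = T u := by
  obtain ⟨G, hG⟩ := LinearMap.exists_extend T.rangeRestrict
  refine ⟨(LinearMap.range T).subtype ∘ₗ G, ?_, fun u => ?_⟩
  · exact Submodule.finiteDimensional_of_le
      ((LinearMap.range_comp_le_range _ _).trans (Submodule.range_subtype _).le)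
  · exact congrArg Subtype.val (LinearMap.congr_fun hG u)

variable {Ω : Type*} [MeasurableSpace Ω] {Λ : Type*}

lemma finiteDimensional_of_forall_eq_comp_simpleFunc {K E : Type*} [DivisionRing K]
    [AddCommGroup E] [Module K E] [FiniteDimensional K E] (π : SimpleFunc Ω Λ)
    {W : Submodule K (Ω → E)} (hW : ∀ f ∈ W, ∃ φ : Λ → E, f = φ ∘ π) :
    FiniteDimensional K W := by
  have : Finite (Set.range π) := π.finite_range
  refine Submodule.finiteDimensional_of_le
    (S₂ := LinearMap.range (LinearMap.funLeft K E (Set.rangeFactorization π))) fun f hf => ?_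
  obtain ⟨φ, rfl⟩ := hW f hf
  exact ⟨φ ∘ Subtype.val, rfl⟩

variable {μ : Measure Ω} {p : Ω → ℝ≥0∞} (𝕜 : Type*) {E : Type*} [NormedAddCommGroup E]

variable (E) in
/-- The functions in `L^{p(·)}(μ)`, as a subspace of all functions `Ω → E`. Functions that agree
almost everywhere are not identified. -/
def evLpSubmodule [NormedField 𝕜] [NormedSpace 𝕜 E] (hpm : AEMeasurable p μ)
    (hp : ∀ᵐ x ∂μ, 1 ≤ p x) : Submodule 𝕜 (Ω → E) where
  carrier := {f | MemEVLp μ p f}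
  zero_mem' := memEVLp_zero hp
  add_mem' := MemEVLp.add hpm hp
  smul_mem' a _ hf := hf.smul hp a

lemma exists_linearMap_eq_cellAverage [NormedField 𝕜] [NormedSpace 𝕜 E]
    [FiniteDimensional 𝕜 E] [NormedSpace ℝ E] [SMulCommClass ℝ 𝕜 E] (hpm : AEMeasurable p μ)
    (hp : ∀ᵐ x ∂μ, 1 ≤ p x) (π : SimpleFunc Ω Λ) {J : Finset Λ}
    (hJ : ∀ l ∈ J, μ (π ⁻¹' {l}) ≠ ∞) :
    ∃ F : (Ω → E) →ₗ[𝕜] (Ω → E), FiniteDimensional 𝕜 (LinearMap.range F) ∧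
      ∀ f, MemEVLp μ p f → F f = cellAverage μ π J f := by
  let T : evLpSubmodule 𝕜 E hpm hp →ₗ[𝕜] (Ω → E) :=
    { toFun f := cellAverage μ π J (f : Ω → E)
      map_add' f g := cellAverage_add (fun l hl => f.2.integrableOn hp (hJ l hl))
        fun l hl => g.2.integrableOn hp (hJ l hl)
      map_smul' a f := cellAverage_smul a (f : Ω → E) }
  have : FiniteDimensional 𝕜 (LinearMap.range T) := by
    refine finiteDimensional_of_forall_eq_comp_simpleFunc π ?_
    rintro _ ⟨f, rfl⟩
    exact ⟨_, SimpleFunc.coe_map ((J : Set Λ).indicator fun l => ⨍ y in π ⁻¹' {l}, f.1 y ∂μ) π⟩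
  obtain ⟨F, hF, hFT⟩ := exists_finiteDimensional_range_extension T
  exact ⟨F, hF, fun f hf => hFT ⟨f, hf⟩⟩

end FiniteRank

section Mesh

variable {Ω : Type*} [MeasurableSpace Ω] {μ : Measure Ω} {Λ β : Type*}

lemma measure_setOf_measure_fiber_lt_le (π : SimpleFunc Ω Λ) (θ : ℝ≥0∞) :
    μ {x | μ (π ⁻¹' {π x}) < θ} ≤ π.range.card * θ := by
  classical
  let S := π.range.filter fun l => μ (π ⁻¹' {l}) < θ
  have hS : {x | μ (π ⁻¹' {π x}) < θ} ⊆ ⋃ l ∈ S, π ⁻¹' {l} := fun x hx =>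
    Set.mem_biUnion (x := π x) (Finset.mem_filter.2 ⟨π.mem_range_self x, hx⟩) rfl
  calc μ {x | μ (π ⁻¹' {π x}) < θ} ≤ ∑ l ∈ S, μ (π ⁻¹' {l}) :=
        (measure_mono hS).trans (measure_biUnion_finset_le _ _)
    _ ≤ S.card • θ := Finset.sum_le_card_nsmul _ _ _ fun l hl => (Finset.mem_filter.1 hl).2.le
    _ ≤ π.range.card * θ := by
        rw [nsmul_eq_mul]
        gcongr
        exact Finset.filter_subset _ _

variable {P : Ω → ℝ} {N n : ℕ}

lemma exists_simpleFunc_level (hPm : Measurable P) (hP1 : ∀ x, 1 ≤ P x) (hPN : ∀ x, P x ≤ N)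
    (hn : 0 < n) :
    ∃ k : SimpleFunc Ω ℕ, (∀ x, k x < n * N) ∧
      ∀ x, P x ∈ Set.Icc (1 + k x / n : ℝ) (1 + k x / n + (n : ℝ)⁻¹) := by
  have hn' : (0 : ℝ) < n := Nat.cast_pos.2 hn
  have hk (x) : ⌊n * (P x - 1)⌋₊ < n * N := by
    rw [Nat.floor_lt (mul_nonneg hn'.le (sub_nonneg.2 (hP1 x)))]
    push_cast
    gcongr
    linarith [hPN x]
  have hkm : Measurable fun x => ⌊n * (P x - 1)⌋₊ :=
    Nat.measurable_floor.comp ((hPm.sub_const 1).const_mul _)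
  refine ⟨⟨_, fun k => hkm (measurableSet_singleton k),
    (Set.finite_Iio (n * N)).subset (Set.range_subset_iff.2 hk)⟩, hk, fun x => ⟨?_, ?_⟩⟩
  · have := Nat.floor_le (mul_nonneg hn'.le (sub_nonneg.2 (hP1 x)))
    rw [← le_sub_iff_add_le', div_le_iff₀' hn']
    exact this
  · have := Nat.lt_floor_add_one (n * (P x - 1))
    rw [add_assoc, ← sub_le_iff_le_add', inv_eq_one_div, ← add_div, le_div_iff₀' hn']
    exact this.le

lemma exists_cells [Zero β] (hPm : Measurable P) (hP1 : ∀ x, 1 ≤ P x) (hPN : ∀ x, P x ≤ N)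
    (hn : 0 < n) {s : SimpleFunc Ω β} (hs : s.FinMeasSupp μ) (θ : ℝ≥0∞) :
    ∃ (π : SimpleFunc Ω (β × ℕ)) (J : Finset (β × ℕ)), (∀ x, (π x).1 = s x) ∧
      (∀ l, ∃ q, 1 ≤ q ∧ ∀ x, π x = l → P x ∈ Set.Icc q (q + (n : ℝ)⁻¹)) ∧
      (∀ l ∈ J, θ ≤ μ (π ⁻¹' {l})) ∧ (∀ l ∈ J, μ (π ⁻¹' {l}) ≠ ∞) ∧
      π ⁻¹' J ⊆ Function.support s ∧
      μ {x | s x ≠ 0 ∧ π x ∉ J} ≤ (s.range.card * (n * N) : ℕ) * θ := by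
  classical
  obtain ⟨k, hkN, hk⟩ := exists_simpleFunc_level hPm hP1 hPN hn
  set π := s.pair k
  let J := π.range.filter fun l => l.1 ≠ 0 ∧ θ ≤ μ (π ⁻¹' {l})
  have hcell (l) (hl : l ∈ J) : π ⁻¹' {l} ⊆ Function.support s := by
    rintro x rfl
    exact (Finset.mem_filter.1 hl).2.1
  refine ⟨π, J, fun x => rfl, fun l => ⟨1 + l.2 / n, ?_, ?_⟩,
    fun l hl => (Finset.mem_filter.1 hl).2.2, fun l hl => ?_, fun x hx => hcell _ hx rfl, ?_⟩
  · exact le_add_of_nonneg_right (by positivity)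
  · rintro x rfl
    exact hk x
  · exact measure_ne_top_of_subset (hcell l hl) (SimpleFunc.finMeasSupp_iff_support.1 hs).ne
  · have hsmall : {x | s x ≠ 0 ∧ π x ∉ J} ⊆ {x | μ (π ⁻¹' {π x}) < θ} := fun x hx =>
      not_le.1 fun h => hx.2 (Finset.mem_filter.2 ⟨π.mem_range_self x, hx.1, h⟩)
    have hrange : π.range ⊆ s.range ×ˢ Finset.range (n * N) := fun l hl => by
      obtain ⟨x, rfl⟩ := SimpleFunc.mem_range.1 hl
      exact Finset.mem_product.2 ⟨s.mem_range_self x, Finset.mem_range.2 (hkN x)⟩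
    calc μ {x | s x ≠ 0 ∧ π x ∉ J} ≤ π.range.card * θ :=
          (measure_mono hsmall).trans (measure_setOf_measure_fiber_lt_le π θ)
      _ ≤ (s.range.card * (n * N) : ℕ) * θ := by
          gcongr
          simpa using Finset.card_le_card hrange

lemma tendsto_one_add_sq_rpow_inv :
    Tendsto (fun n : ℕ => (1 + (n : ℝ≥0∞) ^ 2) ^ (n : ℝ)⁻¹) atTop (𝓝 1) := by
  have hcast : Tendsto (fun n : ℕ => (n : ℝ) + 1) atTop atTop :=
    tendsto_atTop_add_const_right _ _ tendsto_natCast_atTop_atTop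
  have hreal : Tendsto (fun n : ℕ => ENNReal.ofReal (((n : ℝ) + 1) ^ (2 * (n : ℝ)⁻¹)))
      atTop (𝓝 1) := by
    have := (tendsto_rpow_div_mul_add 2 1 (-1) zero_ne_one).comp hcast
    simpa [Function.comp_def, div_eq_mul_inv] using ENNReal.tendsto_ofReal this
  refine tendsto_of_tendsto_of_tendsto_of_le_of_le tendsto_const_nhds hreal (fun n => ?_)
    fun n => ?_
  · simpa using ENNReal.rpow_le_rpow (le_self_add : (1 : ℝ≥0∞) ≤ 1 + (n : ℝ≥0∞) ^ 2)
      (inv_nonneg.2 n.cast_nonneg)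
  · calc (1 + (n : ℝ≥0∞) ^ 2) ^ (n : ℝ)⁻¹ ≤ (((n : ℝ≥0∞) + 1) ^ (2 : ℝ)) ^ (n : ℝ)⁻¹ := by
          gcongr
          rw [ENNReal.rpow_two]
          exact_mod_cast (by linarith [n.zero_le, add_sq n 1] : 1 + n ^ 2 ≤ (n + 1) ^ 2)
      _ = ENNReal.ofReal (((n : ℝ) + 1) ^ (2 * (n : ℝ)⁻¹)) := by
          rw [← ENNReal.rpow_mul, ← ENNReal.ofReal_rpow_of_pos n.cast_add_one_pos]
          simp [ENNReal.ofReal_add]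

lemma tendsto_mul_mul_inv_sq (M : ℕ) :
    Tendsto (fun n : ℕ => ((M * (n * N) : ℕ) : ℝ≥0∞) * ((n : ℝ≥0∞) ^ 2)⁻¹) atTop (𝓝 0) := by
  have h : Tendsto (fun n : ℕ => ((M * N : ℕ) : ℝ≥0∞) * (n : ℝ≥0∞)⁻¹) atTop (𝓝 0) := by
    simpa using ENNReal.Tendsto.const_mul ENNReal.tendsto_inv_nat_nhds_zero
      (.inr (ENNReal.natCast_ne_top (M * N)))
  refine h.congr' ((eventually_ne_atTop 0).mono fun n hn => ?_)
  have hn' : (n : ℝ≥0∞) ≠ 0 := Nat.cast_ne_zero.2 hn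
  have hinv : (n : ℝ≥0∞) * ((n : ℝ≥0∞) ^ 2)⁻¹ = (n : ℝ≥0∞)⁻¹ := by
    rw [sq, ENNReal.mul_inv (.inl hn') (.inr hn'), ← mul_assoc,
      ENNReal.mul_inv_cancel hn' (ENNReal.natCast_ne_top n), one_mul]
  rw [← hinv]
  push_cast
  ring

variable (E : Type*) [NormedAddCommGroup E] [NormedSpace ℝ E]

-- Cells of measure at least `n⁻²` on which `P` oscillates by at most `n⁻¹`, with `n` large.
lemma exists_cells_lintegral_enorm_cellAverage_rpow_le [Zero β] (hPm : Measurable P)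
    (hP1 : ∀ x, 1 ≤ P x) (hPN : ∀ x, P x ≤ N) {s : SimpleFunc Ω β} (hs : s.FinMeasSupp μ)
    {b τ : ℝ≥0∞} (hb : 1 < b) (hτ : 0 < τ) :
    ∃ (π : SimpleFunc Ω (β × ℕ)) (J : Finset (β × ℕ)), (∀ x, (π x).1 = s x) ∧
      (∀ l ∈ J, μ (π ⁻¹' {l}) ≠ 0) ∧ (∀ l ∈ J, μ (π ⁻¹' {l}) ≠ ∞) ∧
      μ {x | s x ≠ 0 ∧ π x ∉ J} < τ ∧
      ∀ f : Ω → E, AEStronglyMeasurable f μ → ∫⁻ x, ‖f x‖ₑ ^ P x ∂μ ≤ 1 →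
        ∫⁻ x, ‖cellAverage μ π J f x‖ₑ ^ P x ∂μ ≤ b := by
  have hsupp : μ (Function.support s) ≠ ∞ := (SimpleFunc.finMeasSupp_iff_support.1 hs).ne
  have hη : Tendsto (fun n : ℕ => ENNReal.ofReal (n : ℝ)⁻¹ * μ (Function.support s)) atTop
      (𝓝 0) := by
    simpa using ENNReal.Tendsto.mul_const
      (ENNReal.tendsto_ofReal (tendsto_inv_atTop_nhds_zero_nat (𝕜 := ℝ))) (.inr hsupp)
  have hbound : Tendsto (fun n : ℕ => (1 + (n : ℝ≥0∞) ^ 2) ^ (n : ℝ)⁻¹ *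
      (1 + ENNReal.ofReal (n : ℝ)⁻¹ * μ (Function.support s))) atTop (𝓝 1) := by
    simpa using ENNReal.Tendsto.mul tendsto_one_add_sq_rpow_inv (.inr (by simp))
      (tendsto_const_nhds.add hη) (.inr (by simp))
  obtain ⟨n, hnb, hnτ, hn⟩ := ((hbound.eventually_le_const hb).and
    (((tendsto_mul_mul_inv_sq (N := N) s.range.card).eventually_lt_const hτ).and
      (eventually_gt_atTop 0))).exists
  have hθ : ((n : ℝ≥0∞) ^ 2)⁻¹ ≠ 0 := by simp
  obtain ⟨π, J, hπ, hosc, hJθ, hJ, hJs, hrest⟩ :=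
    exists_cells hPm hP1 hPN hn hs ((n : ℝ≥0∞) ^ 2)⁻¹
  refine ⟨π, J, hπ, fun l hl => (hθ.bot_lt.trans_le (hJθ l hl)).ne', hJ, hrest.trans_lt hnτ,
    fun f hf hf1 => ?_⟩
  calc ∫⁻ x, ‖cellAverage μ π J f x‖ₑ ^ P x ∂μ
      ≤ (1 + ((n : ℝ≥0∞) ^ 2)⁻¹⁻¹) ^ (n : ℝ)⁻¹ *
          (1 + ENNReal.ofReal (n : ℝ)⁻¹ * μ (π ⁻¹' J)) :=
        lintegral_enorm_cellAverage_rpow_le hθ (by positivity) hJθ hJ hosc hf hf1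
    _ ≤ (1 + (n : ℝ≥0∞) ^ 2) ^ (n : ℝ)⁻¹ *
          (1 + ENNReal.ofReal (n : ℝ)⁻¹ * μ (Function.support s)) := by
        rw [inv_inv]
        gcongr
    _ ≤ b := hnb

end Mesh

section AveragingInLp

variable {Ω : Type*} [MeasurableSpace Ω] {μ : Measure Ω} {p : Ω → ℝ≥0∞} {C : ℝ≥0∞} {ι β : Type*}

lemma exists_measurable_real_exponent (hpm : AEMeasurable p μ) (hp : ∀ᵐ x ∂μ, 1 ≤ p x)
    (hC : C ≠ ∞) (hpC : ∀ᵐ x ∂μ, p x ≤ C) :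
    ∃ (P : Ω → ℝ) (N : ℕ), Measurable P ∧ (∀ x, 1 ≤ P x) ∧ (∀ x, P x ≤ N) ∧
      p =ᵐ[μ] fun x => ENNReal.ofReal (P x) := by
  obtain ⟨N, hN⟩ := exists_nat_ge (max 1 C.toReal)
  refine ⟨fun x => max 1 (min C (hpm.mk p x)).toReal, N,
    measurable_const.max (measurable_const.min hpm.measurable_mk).ennreal_toReal,
    fun x => le_max_left _ _, fun x => ?_, ?_⟩
  · refine le_trans (max_le_max_left 1 ?_) hN
    exact ENNReal.toReal_mono hC (min_le_left _ _)
  · filter_upwards [hpm.ae_eq_mk, hp, hpC] with x hx hx1 hxC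
    have hx1' : 1 ≤ (p x).toReal := by
      simpa using ENNReal.toReal_mono (ne_top_of_le_ne_top hC hxC) hx1
    rw [← hx, min_eq_right hxC, max_eq_right hx1',
      ENNReal.ofReal_toReal (ne_top_of_le_ne_top hC hxC)]

lemma exists_simpleFunc_forall_apply_eq [Finite ι] [Zero β] {s : ι → SimpleFunc Ω β}
    (hs : ∀ i, (s i).FinMeasSupp μ) :
    ∃ t : SimpleFunc Ω (ι → β), t.FinMeasSupp μ ∧ ∀ x i, t x i = s i x := by
  have hrange : (Set.range fun x i => s i x).Finite :=
    (Set.Finite.pi' fun i => (s i).finite_range).subset <| by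
      rintro _ ⟨x, rfl⟩ i
      exact Set.mem_range_self x
  refine ⟨⟨fun x i => s i x, fun b => ?_, hrange⟩, ?_, fun _ _ => rfl⟩
  · have : (fun x i => s i x) ⁻¹' {b} = ⋂ i, s i ⁻¹' {b i} := by
      ext x
      simp [funext_iff]
    rw [this]
    exact MeasurableSet.iInter fun i => (s i).measurableSet_fiber (b i)
  · exact (eventually_all.2 hs).mono fun x hx => funext hx

variable {E : Type*} [NormedAddCommGroup E]

lemma eVNorm_sub_indicator_le (hp : ∀ᵐ x ∂μ, 1 ≤ p x) {f : Ω → E} {A B : Set Ω}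
    (hAB : f.support \ A ⊆ B) {δ : ℝ} (hδ : 0 < δ)
    (hB : ∫⁻ x in B, evpow (‖f x‖ / δ) (p x) ∂μ ≤ 1) : eVNorm μ p (f - A.indicator f) ≤ δ := by
  refine eVNorm_le_of_eModular_le_one hδ (le_trans ?_ ((lintegral_indicator_le _ B).trans hB))
  refine lintegral_mono_ae (hp.mono fun x hx => ?_)
  have hzero : evpow 0 (p x) = 0 := evpow_zero (one_pos.trans_le hx).ne'
  by_cases hxB : x ∈ B
  · rw [Set.indicator_of_mem hxB]
    by_cases hxA : x ∈ A <;> simp [hxA, hzero]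
  · have : f x - A.indicator f x = 0 := by
      by_cases hxA : x ∈ A
      · simp [hxA]
      · simpa [hxA] using mt (fun hfx => hAB ⟨hfx, hxA⟩) hxB
    simp [hxB, this, hzero]

variable [NormedSpace ℝ E]

lemma eModular_eq_lintegral_enorm_smul_rpow {P : Ω → ℝ} (hP : ∀ x, 0 ≤ P x)
    (hpP : p =ᵐ[μ] fun x => ENNReal.ofReal (P x)) (f : Ω → E) {c : ℝ} (hc : 0 < c) :
    eModular μ p f c = ∫⁻ x, ‖(c⁻¹ • f) x‖ₑ ^ P x ∂μ := by
  refine lintegral_congr_ae (hpP.mono fun x hx => ?_)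
  have hnorm : ENNReal.ofReal (‖f x‖ / c) = ‖(c⁻¹ • f) x‖ₑ := by
    rw [← ofReal_norm, Pi.smul_apply, norm_smul, Real.norm_of_nonneg (inv_nonneg.2 hc.le),
      div_eq_inv_mul]
  simp [evpow, hx, ENNReal.toReal_ofReal (hP x), hnorm]

variable (E) in
lemma exists_cells_eModular_cellAverage_le_one [Zero β] (hpm : AEMeasurable p μ)
    (hp : ∀ᵐ x ∂μ, 1 ≤ p x) (hC : C ≠ ∞) (hpC : ∀ᵐ x ∂μ, p x ≤ C) {t : SimpleFunc Ω β}
    (ht : t.FinMeasSupp μ) {a : ℝ} (ha : 1 < a) {τ : ℝ≥0∞} (hτ : 0 < τ) :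
    ∃ (π : SimpleFunc Ω (β × ℕ)) (J : Finset (β × ℕ)), (∀ x, (π x).1 = t x) ∧
      (∀ l ∈ J, μ (π ⁻¹' {l}) ≠ 0) ∧ (∀ l ∈ J, μ (π ⁻¹' {l}) ≠ ∞) ∧
      μ {x | t x ≠ 0 ∧ π x ∉ J} < τ ∧
      ∀ f : Ω → E, AEStronglyMeasurable f μ → ∀ c, 0 < c → eModular μ p f c ≤ 1 →
        eModular μ p (cellAverage μ π J f) (a * c) ≤ 1 := by
  obtain ⟨P, N, hPm, hP1, hPN, hpP⟩ := exists_measurable_real_exponent hpm hp hC hpC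
  have hP0 : ∀ x, 0 ≤ P x := fun x => zero_le_one.trans (hP1 x)
  obtain ⟨π, J, hπ, hJ0, hJ, hJτ, hbound⟩ := exists_cells_lintegral_enorm_cellAverage_rpow_le E
    hPm hP1 hPN ht (ENNReal.one_lt_ofReal.2 ha) hτ
  refine ⟨π, J, hπ, hJ0, hJ, hJτ, fun f hf c hc hfc => ?_⟩
  rw [eModular_eq_lintegral_enorm_smul_rpow hP0 hpP f hc] at hfc
  have hc_le : eModular μ p (cellAverage μ π J f) c ≤ ENNReal.ofReal a := by
    rw [eModular_eq_lintegral_enorm_smul_rpow hP0 hpP _ hc, ← cellAverage_smul]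
    exact hbound _ (hf.const_smul _) hfc
  calc eModular μ p (cellAverage μ π J f) (a * c)
      ≤ ENNReal.ofReal a⁻¹ * eModular μ p (cellAverage μ π J f) c := eModular_mul_le hp _ c ha
    _ ≤ ENNReal.ofReal a⁻¹ * ENNReal.ofReal a := by gcongr
    _ = 1 := by
      rw [← ENNReal.ofReal_mul (by positivity), inv_mul_cancel₀ (by positivity),
        ENNReal.ofReal_one]

end AveragingInLp

section FiniteRankOperators

variable {Ω : Type*} [MeasurableSpace Ω] {μ : Measure Ω} {p : Ω → ℝ≥0∞}
  {𝕜 : Type*} [NormedField 𝕜] {E : Type*} [NormedAddCommGroup E] [NormedSpace 𝕜 E]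

/-- `F` is a finite rank operator on `L^{p(·)}(μ)` of norm at most `c`. It is given on all functions
`Ω → E`, but its values outside `L^{p(·)}(μ)` are arbitrary. -/
structure IsFiniteRankEVLp (μ : Measure Ω) (p : Ω → ℝ≥0∞) (c : ℝ)
    (F : (Ω → E) →ₗ[𝕜] (Ω → E)) : Prop where
  finiteDimensional_range : FiniteDimensional 𝕜 (LinearMap.range F)
  memEVLp : ∀ f, MemEVLp μ p f → MemEVLp μ p (F f)
  eVNorm_le : ∀ f, MemEVLp μ p f → eVNorm μ p (F f) ≤ c * eVNorm μ p f

lemma IsFiniteRankEVLp.smul (hp : ∀ᵐ x ∂μ, 1 ≤ p x) {c : ℝ} {F : (Ω → E) →ₗ[𝕜] (Ω → E)}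
    (hF : IsFiniteRankEVLp μ p c F) {a : 𝕜} (ha : a ≠ 0) :
    IsFiniteRankEVLp μ p (‖a‖ * c) (a • F) where
  finiteDimensional_range := by
    rw [LinearMap.range_smul F a ha]
    exact hF.finiteDimensional_range
  memEVLp f hf := (hF.memEVLp f hf).smul hp a
  eVNorm_le f hf := by
    calc eVNorm μ p (a • F f) ≤ ‖a‖ * eVNorm μ p (F f) := (hF.memEVLp f hf).eVNorm_smul_le ha
      _ ≤ ‖a‖ * (c * eVNorm μ p f) := by gcongr; exact hF.eVNorm_le f hf
      _ = ‖a‖ * c * eVNorm μ p f := (mul_assoc _ _ _).symm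

lemma IsFiniteRankEVLp.eVNorm_sub_apply_le (hpm : AEMeasurable p μ) (hp : ∀ᵐ x ∂μ, 1 ≤ p x)
    {c : ℝ} {F : (Ω → E) →ₗ[𝕜] (Ω → E)} (hF : IsFiniteRankEVLp μ p c F) {f s : Ω → E}
    (hf : MemEVLp μ p f) (hs : MemEVLp μ p s) :
    eVNorm μ p (f - F f) ≤ (1 + c) * eVNorm μ p (f - s) + eVNorm μ p (s - F s) := by
  have hFs := hF.memEVLp s hs
  have hFf := hF.memEVLp f hf
  calc eVNorm μ p (f - F f)
      ≤ eVNorm μ p (f - s) + eVNorm μ p (s - F f) := hf.eVNorm_sub_le_add hpm hp hs hFf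
    _ ≤ eVNorm μ p (f - s) + (eVNorm μ p (s - F s) + eVNorm μ p (F s - F f)) := by
        gcongr
        exact hs.eVNorm_sub_le_add hpm hp hFs hFf
    _ ≤ eVNorm μ p (f - s) + (eVNorm μ p (s - F s) + c * eVNorm μ p (f - s)) := by
        gcongr
        rw [← map_sub, eVNorm_sub_comm f]
        exact hF.eVNorm_le _ (hs.sub hpm hp hf)
    _ = (1 + c) * eVNorm μ p (f - s) + eVNorm μ p (s - F s) := by ring

end FiniteRankOperators

section Contractions

variable {Ω : Type*} [MeasurableSpace Ω] {μ : Measure Ω} {p : Ω → ℝ≥0∞} {C : ℝ≥0∞} {ι : Type*}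
  {𝕜 : Type*} [RCLike 𝕜] {E : Type*} [NormedAddCommGroup E] [NormedSpace 𝕜 E]
  [FiniteDimensional 𝕜 E] [NormedSpace ℝ E] [SMulCommClass ℝ 𝕜 E]

variable (𝕜) in
lemma exists_isFiniteRankEVLp_of_one_lt [Finite ι] (hpm : AEMeasurable p μ)
    (hp : ∀ᵐ x ∂μ, 1 ≤ p x) (hC : C ≠ ∞) (hpC : ∀ᵐ x ∂μ, p x ≤ C) {s : ι → SimpleFunc Ω E}
    (hs : ∀ i, MemEVLp μ p (s i)) {a : ℝ} (ha : 1 < a) {δ : ℝ} (hδ : 0 < δ) :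
    ∃ F : (Ω → E) →ₗ[𝕜] (Ω → E), IsFiniteRankEVLp μ p a F ∧
      ∀ i, eVNorm μ p (⇑(s i) - F (s i)) ≤ δ := by
  have := FiniteDimensional.complete 𝕜 E
  have ha0 : 0 < a := one_pos.trans ha
  obtain ⟨t, ht, hts⟩ := exists_simpleFunc_forall_apply_eq fun i => (hs i).finMeasSupp hC hpC
  obtain ⟨τ, hτ, hτs⟩ := exists_pos_forall_setLIntegral_evpow_le_one hC hpC hs hδ
  obtain ⟨π, J, hπ, hJ0, hJ, hJτ, hmod⟩ :=
    exists_cells_eModular_cellAverage_le_one E hpm hp hC hpC ht ha hτ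
  obtain ⟨F, hFrange, hF⟩ := exists_linearMap_eq_cellAverage 𝕜 (E := E) hpm hp π hJ
  refine ⟨F, ⟨hFrange, fun f hf => ?_, fun f hf => ?_⟩, fun i => ?_⟩
  · rw [hF f hf]
    obtain ⟨hfm, c, hc, hfc⟩ := hf
    exact ⟨SimpleFunc.aestronglyMeasurable _, a * c, mul_pos ha0 hc, hmod f hfm c hc hfc⟩
  · rw [hF f hf]
    exact hf.eVNorm_le_mul ha0 fun c hc hfc => hmod f hf.1 c hc hfc
  · have hsπ : ⇑(s i) = (fun l => l.1 i) ∘ π := funext fun x => by simp [hπ, hts]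
    have hFs : F (s i) = (π ⁻¹' J).indicator (s i) := by
      rw [hF _ (hs i), hsπ, cellAverage_comp_eq_indicator hJ0 hJ]
    have hsupp : (s i : Ω → E).support \ π ⁻¹' J ⊆ {x | t x ≠ 0 ∧ π x ∉ J} := fun x hx =>
      ⟨fun htx => hx.1 (by rw [← hts, htx, Pi.zero_apply]), hx.2⟩
    exact hFs ▸ eVNorm_sub_indicator_le hp hsupp hδ (hτs _ hJτ i)

variable (𝕜) in
lemma exists_isFiniteRankEVLp_one [Finite ι] (hpm : AEMeasurable p μ) (hp : ∀ᵐ x ∂μ, 1 ≤ p x)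
    (hC : C ≠ ∞) (hpC : ∀ᵐ x ∂μ, p x ≤ C) {s : ι → SimpleFunc Ω E}
    (hs : ∀ i, MemEVLp μ p (s i)) {δ : ℝ} (hδ : 0 < δ) :
    ∃ F : (Ω → E) →ₗ[𝕜] (Ω → E), IsFiniteRankEVLp μ p 1 F ∧
      ∀ i, eVNorm μ p (⇑(s i) - F (s i)) ≤ δ := by
  obtain ⟨M, hM⟩ := (Set.finite_range fun i => eVNorm μ p (s i)).bddAbove
  have hM' (i) : eVNorm μ p (s i) ≤ max M 1 := (hM ⟨i, rfl⟩).trans (le_max_left _ _)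
  have hM0 : 0 < max M 1 := lt_max_of_lt_right one_pos
  set κ := δ / 2 / max M 1 with hκ_def
  have hκ : 0 < κ := by positivity
  obtain ⟨F, hF, hFs⟩ := exists_isFiniteRankEVLp_of_one_lt 𝕜 hpm hp hC hpC hs
    (lt_add_of_pos_right 1 hκ) (half_pos hδ)
  set a : 𝕜 := ((1 + κ : ℝ) : 𝕜)⁻¹
  have ha : ‖a‖ = (1 + κ)⁻¹ := by rw [norm_inv, RCLike.norm_of_nonneg (by positivity)]
  have ha0 : a ≠ 0 := norm_pos_iff.1 (ha ▸ by positivity)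
  have hone_sub : ‖1 - a‖ * (1 + κ) = κ := by
    have : 1 - a = ((1 - (1 + κ)⁻¹ : ℝ) : 𝕜) := by simp [a]
    rw [this, RCLike.norm_of_nonneg (sub_nonneg.2 (inv_le_one_of_one_le₀ (by linarith)))]
    field_simp
    ring
  have hsub_ne : 1 - a ≠ 0 := norm_ne_zero_iff.1 (left_ne_zero_of_mul (hone_sub.trans_ne hκ.ne'))
  refine ⟨a • F, by simpa [ha, (by positivity : 1 + κ ≠ 0)] using hF.smul hp ha0, fun i => ?_⟩
  have hFsi := hF.memEVLp _ (hs i)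
  have hsub : F (s i) - (a • F) (s i) = (1 - a) • F (s i) := by
    rw [LinearMap.smul_apply, sub_smul, one_smul]
  calc eVNorm μ p (⇑(s i) - (a • F) (s i))
      ≤ eVNorm μ p (⇑(s i) - F (s i)) + eVNorm μ p (F (s i) - (a • F) (s i)) :=
        (hs i).eVNorm_sub_le_add hpm hp hFsi (hFsi.smul hp a)
    _ ≤ δ / 2 + ‖1 - a‖ * ((1 + κ) * eVNorm μ p (s i)) := by
        rw [hsub]
        gcongr
        · exact hFs i
        · exact (hFsi.eVNorm_smul_le hsub_ne).trans (by gcongr; exact hF.eVNorm_le _ (hs i))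
    _ = δ / 2 + κ * eVNorm μ p (s i) := by rw [← mul_assoc, hone_sub]
    _ ≤ δ / 2 + κ * max M 1 := by gcongr; exact hM' i
    _ = δ := by rw [hκ_def, div_mul_cancel₀ _ hM0.ne', add_halves]

end Contractions

section FiniteNet

variable {Ω : Type*} [MeasurableSpace Ω] {μ : Measure Ω} {p : Ω → ℝ≥0∞}
  {E : Type*} [NormedAddCommGroup E]

lemma exists_finset_eVNorm_sub_lt_of_seqCompact (hpm : AEMeasurable p μ)
    (hp : ∀ᵐ x ∂μ, 1 ≤ p x) {K : Set (Ω → E)} (hK : ∀ f ∈ K, MemEVLp μ p f)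
    (hKcompact : ∀ f : ℕ → Ω → E, (∀ n, f n ∈ K) → ∃ g ∈ K, ∃ φ : ℕ → ℕ, StrictMono φ ∧
      Tendsto (fun n => eVNorm μ p (f (φ n) - g)) atTop (𝓝 0)) {δ : ℝ} (hδ : 0 < δ) :
    ∃ S : Finset (Ω → E), (∀ g ∈ S, MemEVLp μ p g) ∧ ∀ f ∈ K, ∃ g ∈ S, eVNorm μ p (f - g) < δ := by
  by_contra! hnet
  obtain ⟨f, hfK, hfsep⟩ := exists_seq_of_forall_finset_exists (· ∈ K)
    (fun g f => δ ≤ eVNorm μ p (f - g)) fun S hS => hnet S fun g hg => hK g (hS g hg)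
  obtain ⟨g, hgK, φ, hφ, hlim⟩ := hKcompact f hfK
  obtain ⟨n, hn⟩ := eventually_atTop.1 (hlim.eventually_lt_const (half_pos hδ))
  have hlt : eVNorm μ p (f (φ (n + 1)) - f (φ n)) < δ := by
    calc eVNorm μ p (f (φ (n + 1)) - f (φ n))
        ≤ eVNorm μ p (f (φ (n + 1)) - g) + eVNorm μ p (g - f (φ n)) :=
          (hK _ (hfK _)).eVNorm_sub_le_add hpm hp (hK _ hgK) (hK _ (hfK _))
      _ < δ / 2 + δ / 2 := by
          rw [eVNorm_sub_comm g]
          exact add_lt_add (hn (n + 1) n.le_succ) (hn n le_rfl)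
      _ = δ := add_halves δ
  exact (hfsep _ _ (hφ n.lt_succ_self)).not_gt hlt

end FiniteNet

section BoundedApproximationProperty

variable {Ω : Type*} [MeasurableSpace Ω] {μ : Measure Ω} {p : Ω → ℝ≥0∞} {C : ℝ≥0∞}
  {𝕜 : Type*} [RCLike 𝕜] {E : Type*} [NormedAddCommGroup E] [NormedSpace 𝕜 E]
  [FiniteDimensional 𝕜 E] [NormedSpace ℝ E] [SMulCommClass ℝ 𝕜 E]

theorem variable_Lp_bounded_approximation_property_general (hpm : AEMeasurable p μ)
    (hp : ∀ᵐ x ∂μ, 1 ≤ p x) (hC : C ≠ ∞) (hpC : ∀ᵐ x ∂μ, p x ≤ C) {K : Set (Ω → E)}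
    (hK : ∀ f ∈ K, MemEVLp μ p f)
    (hKnet : ∀ δ > 0, ∃ S : Finset (Ω → E), (∀ g ∈ S, MemEVLp μ p g) ∧
      ∀ f ∈ K, ∃ g ∈ S, eVNorm μ p (f - g) < δ) {ε : ℝ} (hε : 0 < ε) :
    ∃ F : (Ω → E) →ₗ[𝕜] (Ω → E), IsFiniteRankEVLp μ p 1 F ∧
      ∀ f ∈ K, eVNorm μ p (f - F f) < ε := by
  obtain ⟨S, hS, hSK⟩ := hKnet (ε / 8) (by positivity)
  choose s hs hsS using fun g : S =>
    (hS g g.2).exists_simpleFunc_eVNorm_sub_le hpm hp hC hpC (by positivity : 0 < ε / 8)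
  obtain ⟨F, hF, hFs⟩ := exists_isFiniteRankEVLp_one 𝕜 hpm hp hC hpC hs (half_pos hε)
  refine ⟨F, hF, fun f hf => ?_⟩
  obtain ⟨g, hg, hfg⟩ := hSK f hf
  have hfs : eVNorm μ p (f - ⇑(s ⟨g, hg⟩)) < ε / 4 := by
    linarith [(hK f hf).eVNorm_sub_le_add hpm hp (hS g hg) (hs ⟨g, hg⟩), hsS ⟨g, hg⟩]
  linarith [hF.eVNorm_sub_apply_le hpm hp (hK f hf) (hs ⟨g, hg⟩), hFs ⟨g, hg⟩]

end BoundedApproximationProperty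

/-- The bounded approximation property (with constant 2) of the variable exponent Lebesgue
space `L^{p(·)}(μ)` for a σ-finite complete measure `μ` and a bounded exponent `p`.
Compactness of `K ⊆ L^{p(·)}(μ)` is expressed as sequential compactness with respect to the
Luxemburg norm, and `‖F‖ ≤ 2` as `‖F f‖_{p(·)} ≤ 2 ‖f‖_{p(·)}` for all `f`. -/
theorem variable_Lp_bounded_approximation_property
    {Ω : Type*} [MeasurableSpace Ω] (μ : Measure Ω) [SigmaFinite μ]
    (hcomp : μ.IsComplete)
    (p : Ω → ℝ≥0∞) (hpm : Measurable p) (hp1 : ∀ x, 1 ≤ p x)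
    (hpbdd : ∃ C : ℝ≥0∞, C < ⊤ ∧ ∀ᵐ x ∂μ, p x ≤ C)
    (K : Set (Ω → ℝ)) (hKmem : ∀ f ∈ K, MemEVLp μ p f)
    (hKcompact : ∀ f : ℕ → Ω → ℝ, (∀ n, f n ∈ K) →
      ∃ g ∈ K, ∃ φ : ℕ → ℕ, StrictMono φ ∧
        Filter.Tendsto (fun n => eVNorm μ p (f (φ n) - g)) Filter.atTop (nhds 0))
    (ε : ℝ) (hε : 0 < ε) :
    ∃ F : (Ω → ℝ) →ₗ[ℝ] (Ω → ℝ),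
      FiniteDimensional ℝ (LinearMap.range F) ∧
      (∀ f : Ω → ℝ, MemEVLp μ p f → MemEVLp μ p (F f) ∧ eVNorm μ p (F f) ≤ 2 * eVNorm μ p f) ∧
      (∀ f ∈ K, eVNorm μ p (f - F f) < ε) := by
  obtain ⟨C, hC, hpC⟩ := hpbdd
  have hpm' : AEMeasurable p μ := hpm.aemeasurable
  have hp : ∀ᵐ x ∂μ, 1 ≤ p x := Eventually.of_forall hp1
  obtain ⟨F, hF, hFK⟩ := variable_Lp_bounded_approximation_property_general (𝕜 := ℝ) hpm' hp
    hC.ne hpC hKmem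
    (fun _ => exists_finset_eVNorm_sub_lt_of_seqCompact hpm' hp hKmem hKcompact) hε
  refine ⟨F, hF.finiteDimensional_range, fun f hf => ⟨hF.memEVLp f hf, ?_⟩, hFK⟩
  linarith [hF.eVNorm_le f hf, eVNorm_nonneg μ p f]
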